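/- (Connectedness of the interval from tinyness, type-theoretic form.) Let 𝕀 : Type be a type equipped with tinyness data: √ : Type → Type, R : {A B : Type} → (Path A → B) → (A → √ B), and L : {A B : Type} → (A → √ B) → (Path A → B), satisfying L (R f) = f, R (L g) = g, and R (f ∘ Path' g) = R f ∘ g for all f, g. Then there is an equivalence (𝕀 → Bool) ≃ Bool. -/

import Mathlib

/-!
Having a right adjoint, `Path` preserves the coproduct `Bool = ⊤ + ⊤`. Concretely, a map out of
`Path Bool` is the transpose of a map `Bool → √ B`, and the latter is determined by its values at
`true` and `false`; by naturality of `R` along the points `Unit → Bool`, these depend only on the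
restriction of the original map to the constant paths. Hence maps out of `Path Bool` that agree on
constant paths are equal. The transpose `r` of `b ↦ R (fun _ => b) ()` is a retraction of
the constant-path map `const : Bool → Path Bool`, and `const ∘ r = id` because both sides agree on
constant paths.
-/

/-!
Statement 8 (connectedness of the interval from tinyness, type-theoretic form):
if the path functor `Path A = 𝕀 → A` has a right adjoint `√` (tinyness data
`R`, `L` satisfying the adjunction and naturality equations), then
`(𝕀 → Bool) ≃ Bool`.
-/

namespace Crisp

/-- The path functor `Path A = 𝕀 → A`. -/
def Path (𝕀 : Type) (A : Type) : Type := 𝕀 → A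

/-- Functorial action of `Path` (postcomposition). -/
def Path' (𝕀 : Type) {A B : Type} (g : A → B) (p : Path 𝕀 A) : Path 𝕀 B :=
  fun i => g (p i)

theorem interval_connected_of_tiny
    (𝕀 : Type)
    (sq : Type → Type)
    (R : {A B : Type} → (Path 𝕀 A → B) → A → sq B)
    (L : {A B : Type} → (A → sq B) → Path 𝕀 A → B)
    (LR : ∀ {A B : Type} (f : Path 𝕀 A → B), L (R f) = f)
    (RL : ∀ {A B : Type} (g : A → sq B), R (L g) = g)
    (Rnat : ∀ {A A' B : Type} (g : A → A') (f : Path 𝕀 A' → B),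
      R (f ∘ Path' 𝕀 g) = R f ∘ g) :
    Nonempty ((𝕀 → Bool) ≃ Bool) := by
  -- Maps out of `Path Bool` are determined by their values on constant paths.
  have ext_const : ∀ {B : Type} (f g : Path 𝕀 Bool → B),
      (∀ b, f (fun _ => b) = g (fun _ => b)) → f = g := by
    intro B f g h
    have hR : R f = R g := by
      funext b
      have hb : f ∘ Path' 𝕀 (fun _ : Unit => b) = g ∘ Path' 𝕀 (fun _ : Unit => b) :=
        funext fun _ => h b
      have key := congrArg (fun k => R k ()) hb
      simpa only [Rnat, Function.comp_apply] using key
    rw [← LR f, hR, LR]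
  let h : Bool → sq Bool := fun b => R (fun _ : Path 𝕀 Unit => b) ()
  let r : Path 𝕀 Bool → Bool := L h
  have hr : ∀ b, r (fun _ => b) = b := by
    intro b
    -- The restriction of `r` along the point `b` has the same transpose as the constant map `b`.
    have hb : R (r ∘ Path' 𝕀 (fun _ : Unit => b)) = R (fun _ : Path 𝕀 Unit => b) := by
      rw [Rnat, RL]
      rfl
    have hb' := congrArg L hb
    rw [LR, LR] at hb'
    exact congrFun hb' (fun _ => ())
  have hconst : (fun p => (fun _ => r p : Path 𝕀 Bool)) = id :=
    ext_const _ _ fun b => funext fun _ => hr b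
  exact ⟨⟨r, fun b _ => b, fun p => congrFun hconst p, hr⟩⟩

end Crisp
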